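/- arXiv:2307.15143 — 3 statements merged into one kernel-verified Lean document; each statement's English description precedes it below -/
import Mathlib

section
/- Let Y be an infinite-dimensional real Banach space that is finitely representable in a real Banach space X, and let M be a subset of Y which, with the metric induced from the norm of Y, is a locally finite metric space. Then for every ε > 0 there exist a map f : M → X and a constant ρ > 0 such that ρ·‖u−v‖ ≤ ‖f(u)−f(v)‖ ≤ ρ·(3+ε)·‖u−v‖ for all u, v ∈ M; that is, M admits a bilipschitz embedding into X with distortion at most 3+ε. -/
open Set Real

/-!
A locally finite `M ⊆ Y` is embedded by gluing together almost isometric copies in `X` of larger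
and larger finite-dimensional pieces of `Y`.  Let `E n` be the span of the points `x ∈ M` with
`θ * log (1 + ‖x‖) ≤ n + 1`, and let `T n : Y → X` be linear and `(1 + θ)`-isometric on `E n`.
With `S t` the piecewise linear path of operators through `T 0, T 1, …` (`interp`), the embedding is
`f x = S (t x) x`, where `t x = θ * log (1 + ‖x‖)`.  If `‖y‖ ≤ ‖x‖`, then
`f x - f y = S (t x) (x - y) + (S (t x) - S (t y)) y`, and the last term has norm at most
`4 * θ * ‖x - y‖`, because `t` varies logarithmically.  Everything thus reduces to bounding each
`S t` from above, which is immediate, and from below on `E ⌊t⌋`.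

The lower bound `(1/3 - θ) * ‖z‖ ≤ ‖S t z‖` needs a good choice of the `T n`.  Start from arbitrary
almost isometries `U k` and a nonprincipal ultrafilter.  For fixed `z` and `l ∈ [0, 1]`, almost all
pairs `k < m` satisfy `‖z‖ / 3 ≤ ‖(1 - l) • U k z + l • U m z‖`: otherwise three indices could be
found all of whose pairs fail, and this contradicts the triangle inequality (`three_vectors`).
A finite net of the unit sphere of `E n` times `[0, 1]` makes the bound uniform at the cost of `θ`
(`eventually_good`), and consecutive indices are then selected one at a time (`exists_chain`).
-/

/-! ### Convex combinations of two almost isometries -/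

/-- Three vectors with large first and last terms cannot have all their pairwise convex combinations
with weights `1 - l`, `l` shorter than a third.  Two combinations sharing a vector bound the
difference of the other two, and the larger of the two weights is the one to divide by. -/
lemma three_vectors {X : Type*} [NormedAddCommGroup X] [NormedSpace ℝ X] {a b c : X} {r l : ℝ}
    (hl0 : 0 ≤ l) (hl1 : l ≤ 1) (ha : r ≤ ‖a‖) (hc : r ≤ ‖c‖)
    (hab : ‖(1 - l) • a + l • b‖ < r / 3) (hac : ‖(1 - l) • a + l • c‖ < r / 3)
    (hbc : ‖(1 - l) • b + l • c‖ < r / 3) : False := by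
  rcases le_total l (1 / 2) with h | h
  · have h1 : (1 - l) * ‖a - b‖ ≤ ‖(1 - l) • a + l • c‖ + ‖(1 - l) • b + l • c‖ := by
      rw [← norm_smul_of_nonneg (by linarith)]
      refine le_trans (le_of_eq ?_) (norm_sub_le _ _)
      congr 1
      module
    have h2 : ‖a‖ ≤ ‖(1 - l) • a + l • b‖ + l * ‖a - b‖ := by
      rw [← norm_smul_of_nonneg hl0]
      refine le_trans (le_of_eq ?_) (norm_add_le _ _)
      congr 1
      module
    have h3 : l * ‖a - b‖ ≤ (1 - l) * ‖a - b‖ :=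
      mul_le_mul_of_nonneg_right (by linarith) (norm_nonneg _)
    linarith
  · have h1 : l * ‖b - c‖ ≤ ‖(1 - l) • a + l • b‖ + ‖(1 - l) • a + l • c‖ := by
      rw [← norm_smul_of_nonneg hl0]
      refine le_trans (le_of_eq ?_) (norm_sub_le _ _)
      congr 1
      module
    have h2 : ‖c‖ ≤ ‖(1 - l) • b + l • c‖ + (1 - l) * ‖b - c‖ := by
      rw [← norm_smul_of_nonneg (by linarith)]
      refine le_trans (le_of_eq ?_) (norm_sub_le _ _)
      congr 1
      module
    have h3 : (1 - l) * ‖b - c‖ ≤ l * ‖b - c‖ :=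
      mul_le_mul_of_nonneg_right (by linarith) (norm_nonneg _)
    linarith

lemma eventually_pair {X : Type*} [NormedAddCommGroup X] [NormedSpace ℝ X] (𝒰 : Ultrafilter ℕ)
    (v : ℕ → X) {r l : ℝ} (hl0 : 0 ≤ l) (hl1 : l ≤ 1) (hv : ∀ᶠ k in 𝒰, r ≤ ‖v k‖) :
    ∀ᶠ k in 𝒰, ∀ᶠ m in 𝒰, r / 3 ≤ ‖(1 - l) • v k + l • v m‖ := by
  by_contra hcon
  rw [← Ultrafilter.eventually_not] at hcon
  have hbad : ∀ᶠ k in 𝒰, ∀ᶠ m in 𝒰, ‖(1 - l) • v k + l • v m‖ < r / 3 := by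
    filter_upwards [hcon] with k hk
    rw [← Ultrafilter.eventually_not] at hk
    filter_upwards [hk] with m hm using not_le.1 hm
  obtain ⟨k, hk, hka⟩ := (hbad.and hv).exists
  obtain ⟨m, hm, hkm⟩ := (hbad.and hk).exists
  obtain ⟨n, ⟨hkn, hmn⟩, hn⟩ := ((hk.and hm).and hv).exists
  exact three_vectors hl0 hl1 hka hn hkm hkn hmn

/-- The bound of `eventually_pair` holds uniformly on a finite-dimensional subspace, up to `η`. -/
lemma eventually_good {X Y : Type*} [NormedAddCommGroup X] [NormedSpace ℝ X]
    [NormedAddCommGroup Y] [NormedSpace ℝ Y] (𝒰 : Ultrafilter ℕ) (U : ℕ → Y →ₗ[ℝ] X)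
    (E : Submodule ℝ Y) [FiniteDimensional ℝ E]
    (hU : ∀ᶠ k in 𝒰, ∀ z ∈ E, ‖z‖ ≤ ‖U k z‖ ∧ ‖U k z‖ ≤ 2 * ‖z‖) {η : ℝ} (hη : 0 < η) :
    ∀ᶠ k in 𝒰, ∀ᶠ m in 𝒰, ∀ z ∈ E, ∀ l : ℝ, 0 ≤ l → l ≤ 1 →
      (1 / 3 - η) * ‖z‖ ≤ ‖(1 - l) • U k z + l • U m z‖ := by
  have : ProperSpace E := FiniteDimensional.proper_real E
  have hK : IsCompact (Metric.sphere (0 : E) 1 ×ˢ Icc (0 : ℝ) 1) :=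
    (isCompact_sphere _ _).prod isCompact_Icc
  -- `(z, l) ↦ (1 - l) • U k z + l • U m z` is `6`-Lipschitz on this set, so mesh `η / 6` suffices.
  obtain ⟨N, hNK, hNfin, hcover⟩ := hK.finite_cover_balls (e := η / 6) (by positivity)
  have hnet : ∀ᶠ k in 𝒰, ∀ᶠ m in 𝒰, ∀ p ∈ N,
      1 / 3 ≤ ‖(1 - p.2) • U k (p.1 : Y) + p.2 • U m (p.1 : Y)‖ := by
    have h : ∀ᶠ k in 𝒰, ∀ p ∈ N, ∀ᶠ m in 𝒰,
        1 / 3 ≤ ‖(1 - p.2) • U k (p.1 : Y) + p.2 • U m (p.1 : Y)‖ := by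
      rw [Filter.eventually_all_finite hNfin]
      intro p hp
      obtain ⟨hp1, hp2, hp3⟩ := hNK hp
      refine eventually_pair 𝒰 (fun k => U k (p.1 : Y)) hp2 hp3 ?_
      filter_upwards [hU] with k hk
      have : ‖(p.1 : Y)‖ = 1 := by simpa using hp1
      rw [← this]
      exact (hk _ p.1.2).1
    filter_upwards [h] with k hk
    rwa [Filter.eventually_all_finite hNfin]
  filter_upwards [hnet, hU] with k hk hUk
  filter_upwards [hk, hU] with m hm hUm
  have hunit : ∀ z ∈ E, ‖z‖ = 1 → ∀ l : ℝ, 0 ≤ l → l ≤ 1 →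
      1 / 3 - η ≤ ‖(1 - l) • U k z + l • U m z‖ := by
    intro z hz hz1 l hl0 hl1
    have hmem : ((⟨z, hz⟩ : E), l) ∈ Metric.sphere (0 : E) 1 ×ˢ Icc (0 : ℝ) 1 :=
      ⟨by simpa using hz1, hl0, hl1⟩
    obtain ⟨p, hp, hpb⟩ := mem_iUnion₂.1 (hcover hmem)
    obtain ⟨hp1, hp2, hp3⟩ := hNK hp
    obtain ⟨⟨w, hw⟩, q⟩ := p
    have hw1 : ‖w‖ = 1 := by simpa using hp1
    simp only at hp2 hp3
    rw [Metric.mem_ball, Prod.dist_eq, max_lt_iff] at hpb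
    have hd1 : ‖z - w‖ < η / 6 := by
      have := hpb.1
      rwa [Subtype.dist_eq, dist_eq_norm] at this
    have hd2 : |l - q| < η / 6 := by simpa [Real.dist_eq] using hpb.2
    have hmain := hm _ hp
    simp only at hmain
    have hk1 := (hUk _ (E.sub_mem hz hw)).2
    have hm1 := (hUm _ (E.sub_mem hz hw)).2
    have hk2 := (hUk _ hw).2
    have hm2 := (hUm _ hw).2
    have hsplit : (1 - q) • U k w + q • U m w = ((1 - l) • U k z + l • U m z)
        - ((1 - l) • U k (z - w) + l • U m (z - w)) - (l - q) • (U m w - U k w) := by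
      rw [map_sub, map_sub]
      module
    have hA : ‖(1 - l) • U k (z - w) + l • U m (z - w)‖ ≤ 2 * ‖z - w‖ := by
      refine (norm_add_le _ _).trans ?_
      rw [norm_smul_of_nonneg (by linarith), norm_smul_of_nonneg hl0]
      nlinarith
    have hB : ‖(l - q) • (U m w - U k w)‖ ≤ |l - q| * 4 := by
      rw [norm_smul, Real.norm_eq_abs]
      refine mul_le_mul_of_nonneg_left ((norm_sub_le _ _).trans ?_) (abs_nonneg _)
      linarith
    have hC := norm_sub_le (((1 - l) • U k z + l • U m z)
        - ((1 - l) • U k (z - w) + l • U m (z - w))) ((l - q) • (U m w - U k w))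
    have hD := norm_sub_le ((1 - l) • U k z + l • U m z)
        ((1 - l) • U k (z - w) + l • U m (z - w))
    rw [hsplit] at hmain
    linarith
  intro z hz l hl0 hl1
  rcases eq_or_ne z 0 with rfl | hz0
  · simp
  have hpos : 0 < ‖z‖ := norm_pos_iff.2 hz0
  have h := hunit (‖z‖⁻¹ • z) (E.smul_mem _ hz)
    (by rw [norm_smul, norm_inv, norm_norm, inv_mul_cancel₀ hpos.ne']) l hl0 hl1
  rw [map_smul, map_smul, smul_comm (1 - l), smul_comm l, ← smul_add, norm_smul, norm_inv,
    norm_norm, inv_mul_eq_div, le_div_iff₀ hpos] at h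
  exact h

/-! ### Selecting consecutive indices -/

/-- Diagonal selection: if for every `n` almost all pairs satisfy `G n`, there is a sequence whose
`n`-th consecutive pair satisfies `G n`. -/
lemma exists_chain (𝒰 : Ultrafilter ℕ) (h𝒰 : (𝒰 : Filter ℕ) ≤ Filter.atTop)
    (G : ℕ → ℕ → ℕ → Prop) (hG : ∀ n, ∀ᶠ k in 𝒰, ∀ᶠ m in 𝒰, G n k m) :
    ∃ s : ℕ → ℕ, ∀ n, n ≤ s n ∧ G n (s n) (s (n + 1)) := by
  have hge : ∀ n, ∀ᶠ k in 𝒰, n ≤ k := fun n =>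
    Filter.Eventually.filter_mono h𝒰 (Filter.eventually_ge_atTop n)
  have step : ∀ n (k : {k : ℕ // n ≤ k ∧ ∀ᶠ m in 𝒰, G n k m}),
      ∃ k' : {k : ℕ // n + 1 ≤ k ∧ ∀ᶠ m in 𝒰, G (n + 1) k m}, G n k k' := by
    rintro n ⟨k, -, hk⟩
    obtain ⟨k', ⟨h1, h2⟩, h3⟩ := (((hge (n + 1)).and (hG (n + 1))).and hk).exists
    exact ⟨⟨k', h1, h2⟩, h3⟩
  choose next hnext using step
  obtain ⟨k₀, h₀⟩ := ((hge 0).and (hG 0)).exists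
  let s : ∀ n, {k : ℕ // n ≤ k ∧ ∀ᶠ m in 𝒰, G n k m} := fun n =>
    Nat.rec ⟨k₀, h₀⟩ (fun n k => next n k) n
  exact ⟨fun n => (s n).1, fun n => ⟨(s n).2.1, hnext n (s n)⟩⟩

/-! ### Piecewise linear interpolation at logarithmic speed -/

/-- The piecewise linear path through the points `a 0, a 1, a 2, …`, at time `t ≥ 0`. -/
noncomputable def interp {X : Type*} [AddCommGroup X] [Module ℝ X] (a : ℕ → X) (t : ℝ) : X :=
  (1 - (t - ⌊t⌋₊)) • a ⌊t⌋₊ + (t - ⌊t⌋₊) • a (⌊t⌋₊ + 1)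

/-- `interp a` is `C`-Lipschitz to the right of `s` if the points of `a` from index `⌊s⌋` on are
within distance `C` of one another. -/
lemma interp_lipschitz {X : Type*} [NormedAddCommGroup X] [NormedSpace ℝ X] (a : ℕ → X)
    {C s t : ℝ} (hs : 0 ≤ s) (hst : s ≤ t)
    (ha : ∀ i j, ⌊s⌋₊ ≤ i → ⌊s⌋₊ ≤ j → ‖a i - a j‖ ≤ C) :
    ‖interp a t - interp a s‖ ≤ C * (t - s) := by
  have hmn : ⌊s⌋₊ ≤ ⌊t⌋₊ := Nat.floor_mono hst
  have hs1 := Nat.floor_le hs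
  have hs2 := Nat.lt_floor_add_one s
  have ht1 := Nat.floor_le (hs.trans hst)
  unfold interp
  generalize ⌊s⌋₊ = m at *
  generalize ⌊t⌋₊ = n at *
  rcases hmn.eq_or_lt with rfl | hlt
  · have : ((1 - (t - m)) • a m + (t - m) • a (m + 1)) - ((1 - (s - m)) • a m + (s - m) • a (m + 1))
        = (t - s) • (a (m + 1) - a m) := by module
    rw [this, norm_smul_of_nonneg (by linarith), mul_comm]
    exact mul_le_mul_of_nonneg_right (ha _ _ (by omega) le_rfl) (by linarith)
  · have hsplit : ((1 - (t - n)) • a n + (t - n) • a (n + 1))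
          - ((1 - (s - m)) • a m + (s - m) • a (m + 1))
        = (t - n) • (a (n + 1) - a n) + (a n - a (m + 1))
          + (1 - (s - m)) • (a (m + 1) - a m) := by module
    have h1 : ‖(t - n) • (a (n + 1) - a n)‖ ≤ (t - n) * C := by
      rw [norm_smul_of_nonneg (by linarith)]
      exact mul_le_mul_of_nonneg_left (ha _ _ (by omega) (by omega)) (by linarith)
    have h3 : ‖(1 - (s - m)) • (a (m + 1) - a m)‖ ≤ (1 - (s - m)) * C := by
      rw [norm_smul_of_nonneg (by linarith)]
      exact mul_le_mul_of_nonneg_left (ha _ _ (by omega) (by omega)) (by linarith)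
    have h2 : ‖a n - a (m + 1)‖ ≤ (n - (m + 1)) * C := by
      rcases (Nat.succ_le_of_lt hlt).eq_or_lt with h | h
      · subst h
        simp
      · have hn : (m : ℝ) + 1 + 1 ≤ n := by exact_mod_cast h
        have hb := ha n (m + 1) (by omega) (by omega)
        have hC : 0 ≤ C := (norm_nonneg _).trans hb
        nlinarith
    rw [hsplit]
    refine (norm_add_le _ _).trans ((add_le_add (norm_add_le _ _) le_rfl).trans ?_)
    linarith

lemma log_increment {a b : ℝ} (ha : 0 ≤ a) (hab : a ≤ b) :
    (Real.log (1 + b) - Real.log (1 + a)) * a ≤ b - a := by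
  have h1 : (0 : ℝ) < 1 + a := by linarith
  rw [← Real.log_div (by linarith) h1.ne']
  have h2 := Real.log_le_sub_one_of_pos (div_pos (by linarith : (0 : ℝ) < 1 + b) h1)
  have h3 : (1 + b) / (1 + a) - 1 = (b - a) / (1 + a) := by
    field_simp
    ring
  rw [h3] at h2
  calc _ ≤ (b - a) / (1 + a) * a := mul_le_mul_of_nonneg_right h2 ha
    _ ≤ b - a := by
      rw [div_mul_eq_mul_div, div_le_iff₀ h1]
      nlinarith

/-! ### The embedding -/

/-- **Theorem (Catrina–Ostrovskii, main theorem).**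
Let `Y` be an infinite-dimensional real Banach space, finitely representable in a real
Banach space `X`.  Let `M ⊆ Y` be locally finite (every ball of finite radius centered at a
point of `M` contains finitely many points of `M`).  Then for every `ε > 0`, `M` admits a
bilipschitz embedding into `X` with distortion at most `3 + ε`. -/
theorem finite_determination_main
    (Y X : Type*)
    [NormedAddCommGroup Y] [NormedSpace ℝ Y] [CompleteSpace Y]
    [NormedAddCommGroup X] [NormedSpace ℝ X] [CompleteSpace X]
    (hY : ¬ FiniteDimensional ℝ Y)
    -- `Y` is finitely representable in `X`:
    (hfinrep : ∀ α : ℝ, 0 < α → ∀ F : Subspace ℝ Y, FiniteDimensional ℝ F →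
      ∃ T : F →ₗ[ℝ] X, ∀ y : F, ‖y‖ ≤ ‖T y‖ ∧ ‖T y‖ ≤ (1 + α) * ‖y‖)
    (M : Set Y)
    -- `M` is a locally finite metric space:
    (hM : ∀ y ∈ M, ∀ r : ℝ, (M ∩ {z : Y | ‖z - y‖ ≤ r}).Finite)
    (ε : ℝ) (hε : 0 < ε) :
    ∃ (f : M → X) (ρ : ℝ), 0 < ρ ∧
      ∀ u v : M, ρ * ‖(u : Y) - (v : Y)‖ ≤ ‖f u - f v‖ ∧
        ‖f u - f v‖ ≤ ρ * (3 + ε) * ‖(u : Y) - (v : Y)‖ := by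
  classical
  set θ : ℝ := ε / (60 + 15 * ε) with hθdef
  have hden : 0 < 60 + 15 * ε := by linarith
  have hθ : 0 < θ := div_pos hε hden
  have hθmul : θ * (60 + 15 * ε) = ε := div_mul_cancel₀ _ hden.ne'
  have hθ1 : θ < 1 / 15 := by nlinarith
  let t : Y → ℝ := fun x => θ * Real.log (1 + ‖x‖)
  have ht0 : ∀ x, 0 ≤ t x := fun x =>
    mul_nonneg hθ.le (Real.log_nonneg (by linarith [norm_nonneg x]))
  have htmono : ∀ x y : Y, ‖y‖ ≤ ‖x‖ → t y ≤ t x := fun x y h =>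
    mul_le_mul_of_nonneg_left
      (Real.log_le_log (by linarith [norm_nonneg y]) (by linarith)) hθ.le
  let A : ℕ → Set Y := fun n => {x | x ∈ M ∧ t x ≤ n + 1}
  have hAfin : ∀ n, (A n).Finite := by
    intro n
    rcases M.eq_empty_or_nonempty with h | ⟨y₀, hy₀⟩
    · exact Set.finite_empty.subset fun x hx => by simpa [h] using hx.1
    refine (hM y₀ hy₀ (Real.exp ((n + 1) / θ) + ‖y₀‖)).subset ?_
    rintro x ⟨hxM, hx⟩
    refine ⟨hxM, (norm_sub_le _ _).trans ?_⟩
    have h1 : Real.log (1 + ‖x‖) ≤ (n + 1) / θ := by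
      rw [le_div_iff₀ hθ, mul_comm]
      exact hx
    have h2 := (Real.log_le_iff_le_exp (by linarith [norm_nonneg x])).1 h1
    linarith
  let E : ℕ → Submodule ℝ Y := fun n => Submodule.span ℝ (A n)
  have hEmono : ∀ m n, m ≤ n → E m ≤ E n := fun m n hmn =>
    Submodule.span_mono fun x hx => ⟨hx.1, hx.2.trans (by gcongr)⟩
  have hEfin : ∀ n, FiniteDimensional ℝ (E n) := fun n =>
    FiniteDimensional.span_of_finite ℝ (hAfin n)
  have hUex : ∀ n, ∃ U : Y →ₗ[ℝ] X, ∀ z ∈ E n, ‖z‖ ≤ ‖U z‖ ∧ ‖U z‖ ≤ (1 + θ) * ‖z‖ := by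
    intro n
    obtain ⟨T, hT⟩ := hfinrep θ hθ (E n) (hEfin n)
    obtain ⟨U, hU⟩ := T.exists_extend
    refine ⟨U, fun z hz => ?_⟩
    have : U z = T ⟨z, hz⟩ := by rw [← hU]; rfl
    rw [this]
    exact hT ⟨z, hz⟩
  choose U hU using hUex
  have h𝒰 : ((Filter.hyperfilter ℕ : Ultrafilter ℕ) : Filter ℕ) ≤ Filter.atTop :=
    Nat.hyperfilter_le_atTop
  obtain ⟨s, hs⟩ := exists_chain (Filter.hyperfilter ℕ) h𝒰
    (fun n k m => ∀ z ∈ E n, ∀ l : ℝ, 0 ≤ l → l ≤ 1 →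
      (1 / 3 - θ) * ‖z‖ ≤ ‖(1 - l) • U k z + l • U m z‖) (fun n => by
        have := hEfin n
        refine eventually_good _ U (E n) ?_ hθ
        filter_upwards [h𝒰 (Filter.eventually_ge_atTop n)] with k hk z hz
        have h := hU k z (hEmono n k hk hz)
        refine ⟨h.1, h.2.trans ?_⟩
        exact mul_le_mul_of_nonneg_right (by linarith) (norm_nonneg _))
  let T : ℕ → Y →ₗ[ℝ] X := fun n => U (s n)
  have hT : ∀ n i, n ≤ i → ∀ z ∈ E n, ‖T i z‖ ≤ (1 + θ) * ‖z‖ := fun n i hni z hz =>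
    (hU (s i) z (hEmono n _ (hni.trans (hs i).1) hz)).2
  have hmem : ∀ x ∈ M, ∀ r : ℝ, t x ≤ r → x ∈ E ⌊r⌋₊ := fun x hx r hr =>
    Submodule.subset_span ⟨hx, hr.trans (Nat.lt_floor_add_one r).le⟩
  have key : ∀ x ∈ M, ∀ y ∈ M, ‖y‖ ≤ ‖x‖ →
      (1 / 3 - 5 * θ) * ‖x - y‖ ≤ ‖interp (T · x) (t x) - interp (T · y) (t y)‖ ∧
      ‖interp (T · x) (t x) - interp (T · y) (t y)‖ ≤ (1 + 5 * θ) * ‖x - y‖ := by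
    intro x hx y hy hyx
    have hyxt := htmono x y hyx
    have hz : x - y ∈ E ⌊t x⌋₊ :=
      Submodule.sub_mem _ (hmem x hx _ le_rfl) (hmem y hy _ hyxt)
    have hsplit : interp (T · x) (t x) - interp (T · y) (t y)
        = interp (T · (x - y)) (t x) + (interp (T · y) (t x) - interp (T · y) (t y)) := by
      simp only [interp, map_sub]
      module
    have hl0 : 0 ≤ t x - ⌊t x⌋₊ := by linarith [Nat.floor_le (ht0 x)]
    have hl1 : t x - ⌊t x⌋₊ ≤ 1 := by linarith [Nat.lt_floor_add_one (t x)]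
    have hlow : (1 / 3 - θ) * ‖x - y‖ ≤ ‖interp (T · (x - y)) (t x)‖ :=
      (hs ⌊t x⌋₊).2 (x - y) hz _ hl0 hl1
    have hup : ‖interp (T · (x - y)) (t x)‖ ≤ (1 + θ) * ‖x - y‖ := by
      refine (norm_add_le _ _).trans ?_
      rw [norm_smul_of_nonneg (by linarith), norm_smul_of_nonneg hl0]
      have h1 := mul_le_mul_of_nonneg_left (hT _ _ le_rfl _ hz)
        (by linarith : 0 ≤ 1 - (t x - ⌊t x⌋₊))
      have h2 := mul_le_mul_of_nonneg_left (hT _ _ (Nat.le_succ _) _ hz) hl0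
      exact (add_le_add h1 h2).trans (le_of_eq (by ring))
    have herr : ‖interp (T · y) (t x) - interp (T · y) (t y)‖ ≤ 4 * θ * ‖x - y‖ := by
      have h1 := interp_lipschitz (T · y) (C := 4 * ‖y‖) (ht0 y) hyxt (fun i j hi hj => by
        have hyE := hmem y hy _ le_rfl
        have hi' := hT _ i hi y hyE
        have hj' := hT _ j hj y hyE
        have hn := mul_le_mul_of_nonneg_right (by linarith : 1 + θ ≤ 2) (norm_nonneg y)
        exact (norm_sub_le _ _).trans (by linarith))
      have h2 := mul_le_mul_of_nonneg_left (log_increment (norm_nonneg y) hyx)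
        (by linarith : 0 ≤ 4 * θ)
      have h3 := mul_le_mul_of_nonneg_left (norm_sub_norm_le x y) (by linarith : 0 ≤ 4 * θ)
      refine h1.trans (le_trans (le_of_eq ?_) (h2.trans h3))
      simp only [t]
      ring
    rw [hsplit]
    constructor
    · have := norm_sub_le (interp (T · (x - y)) (t x)
        + (interp (T · y) (t x) - interp (T · y) (t y)))
        (interp (T · y) (t x) - interp (T · y) (t y))
      rw [add_sub_cancel_right] at this
      linarith
    · refine (norm_add_le _ _).trans ?_
      linarith
  -- `θ` is chosen so that `1 + 5 * θ ≤ (1/3 - 5 * θ) * (3 + ε)`, with equality.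
  have hconst : 1 + 5 * θ ≤ (1 / 3 - 5 * θ) * (3 + ε) := by nlinarith
  refine ⟨fun x => interp (T · (x : Y)) (t x), 1 / 3 - 5 * θ, by linarith, ?_⟩
  have hfin : ∀ x ∈ M, ∀ y ∈ M, ‖y‖ ≤ ‖x‖ →
      (1 / 3 - 5 * θ) * ‖x - y‖ ≤ ‖interp (T · x) (t x) - interp (T · y) (t y)‖ ∧
      ‖interp (T · x) (t x) - interp (T · y) (t y)‖
        ≤ (1 / 3 - 5 * θ) * (3 + ε) * ‖x - y‖ := fun x hx y hy h =>
    ⟨(key x hx y hy h).1, (key x hx y hy h).2.trans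
      (mul_le_mul_of_nonneg_right hconst (norm_nonneg _))⟩
  rintro ⟨u, hu⟩ ⟨v, hv⟩
  rcases le_total ‖v‖ ‖u‖ with h | h
  · exact hfin u hu v hv h
  · have h' := hfin v hv u hu h
    rw [norm_sub_rev v u, norm_sub_rev (interp (T · v) (t v))] at h'
    exact h'
end

section
/- The function p(τ) = cos(τ)·(1+tan(τ))/(1+2·tan(τ)) is decreasing on the interval [0, π/4] with minimum value p(π/4) = √2/3, and the function q(τ) = sin(τ)·(1+cot(τ))/(1+2·cot(τ)) is increasing on the interval [π/4, π/2] with minimum value q(π/4) = √2/3. -/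
/-!
The function `p τ = cos τ * (1 + tan τ) / (1 + 2 * tan τ)` is the product of two positive strictly
decreasing factors: `cos τ`, and `(1 + t) / (1 + 2 * t) = 1/2 + 1 / (2 * (1 + 2 * t))` evaluated
at the increasing quantity `t = tan τ ≥ 0`. The reflection `τ ↦ π/2 - τ` exchanges `sin` with `cos`
and `cot` with `tan`, so `q τ = p (π/2 - τ)`, and `q` is increasing.
-/

open Real

/-- Strict decrease of the first branch. It holds on `[0, π/2)`, where `tan` is nonnegative. -/
lemma strictAntiOn_cos_tan :
    StrictAntiOn (fun τ : ℝ => Real.cos τ * (1 + Real.tan τ) / (1 + 2 * Real.tan τ))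
      (Set.Ico 0 (π / 2)) := by
  intro x hx y hy hxy
  have hpi := Real.pi_pos
  have hcos : Real.cos y < Real.cos x :=
    Real.cos_lt_cos_of_nonneg_of_le_pi_div_two hx.1 hy.2.le hxy
  have hcy : 0 < Real.cos y := Real.cos_pos_of_mem_Ioo ⟨by linarith [hy.1], hy.2⟩
  have htan : Real.tan x < Real.tan y :=
    Real.tan_lt_tan_of_nonneg_of_lt_pi_div_two hx.1 hy.2 hxy
  have htx : 0 ≤ Real.tan x := Real.tan_nonneg_of_nonneg_of_le_pi_div_two hx.1 hx.2.le
  have hratio : (1 + Real.tan y) / (1 + 2 * Real.tan y) <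
      (1 + Real.tan x) / (1 + 2 * Real.tan x) := by
    rw [div_lt_div_iff₀ (by linarith) (by linarith)]
    nlinarith
  have hpos : 0 < (1 + Real.tan y) / (1 + 2 * Real.tan y) :=
    div_pos (by linarith) (by linarith)
  simp only [mul_div_assoc]
  exact mul_lt_mul hcos hratio.le hpos (hcy.trans hcos).le

/-- No exceptional points: where `sin x = 0`, both sides are `0` by the division convention. -/
lemma tan_pi_div_two_sub_eq_cot (x : ℝ) : Real.tan (π / 2 - x) = Real.cot x := by
  rw [Real.tan_eq_sin_div_cos, Real.sin_pi_div_two_sub, Real.cos_pi_div_two_sub,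
    Real.cot_eq_cos_div_sin]

/-- **Remark (monotonicity of the two branches of the trigonometric estimate).**
`p τ = cos τ (1 + tan τ)/(1 + 2 tan τ)` is (strictly) decreasing on `[0, π/4]` with minimum
value `p(π/4) = √2/3`, and `q τ = sin τ (1 + cot τ)/(1 + 2 cot τ)` is (strictly) increasing
on `[π/4, π/2]` with minimum value `q(π/4) = √2/3`.  (At the endpoints `τ = 0` and
`τ = π/2` the formulas are understood by continuous extension; with Mathlib's conventions
`Real.cot 0 = 0` and `Real.tan (π/2) = 0`, the displayed formulas already take the extended
values `p 0 = 1` and `q (π/2) = 1` there.) -/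
theorem p_decreasing_q_increasing :
    (StrictAntiOn (fun τ : ℝ => Real.cos τ * (1 + Real.tan τ) / (1 + 2 * Real.tan τ))
        (Set.Icc 0 (π / 4)) ∧
      Real.cos (π / 4) * (1 + Real.tan (π / 4)) / (1 + 2 * Real.tan (π / 4)) =
        Real.sqrt 2 / 3) ∧
    (StrictMonoOn (fun τ : ℝ => Real.sin τ * (1 + Real.cot τ) / (1 + 2 * Real.cot τ))
        (Set.Icc (π / 4) (π / 2)) ∧
      Real.sin (π / 4) * (1 + Real.cot (π / 4)) / (1 + 2 * Real.cot (π / 4)) =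
        Real.sqrt 2 / 3) := by
  have hpi := Real.pi_pos
  have hcot : Real.cot (π / 4) = 1 := by
    rw [← tan_pi_div_two_sub_eq_cot, show π / 2 - π / 4 = π / 4 by ring, Real.tan_pi_div_four]
  refine ⟨⟨strictAntiOn_cos_tan.mono fun x hx => ⟨hx.1, by linarith [hx.2]⟩, ?_⟩, ?_, ?_⟩
  · rw [Real.tan_pi_div_four, Real.cos_pi_div_four]
    ring
  · intro x hx y hy hxy
    have h := strictAntiOn_cos_tan (a := π / 2 - y) (b := π / 2 - x)
      ⟨by linarith [hy.2], by linarith [hy.1]⟩ ⟨by linarith [hx.2], by linarith [hx.1]⟩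
      (by linarith)
    simpa only [Real.cos_pi_div_two_sub, tan_pi_div_two_sub_eq_cot] using h
  · rw [hcot, Real.sin_pi_div_four]
    ring
end

section
/- Let (M, d) be a locally finite metric space, X an infinite-dimensional real Banach space, and C ≥ 1. Suppose that for each finite subset N ⊆ M there exist a map f_N : N → X and a constant r_N > 0 with r_N·d(u,v) ≤ ‖f_N(u) − f_N(v)‖ ≤ r_N·C·d(u,v) for all u, v ∈ N (i.e., every finite subset of M embeds into X with distortion at most C). Then for every ε > 0 there exist a map F : M → X and a constant r > 0 with r·d(u,v) ≤ ‖F(u) − F(v)‖ ≤ r·(3+ε)·C·d(u,v) for all u, v ∈ M (i.e., M embeds into X with distortion at most (3+ε)·C). -/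
/-!
Fix a base point `O` and, for each `n`, an embedding `f n` of the ball of radius `n` with
`d ≤ ‖f n u - f n v‖ ≤ C d` and `f n O = 0`.  The global map is obtained by gluing a subsequence
of the `f n` logarithmically slowly: with `τ x = δ * log (1 + dist x O)`, the point `x` is sent to
the value at time `τ x` of the piecewise linear path through `f (n 0) x, f (n 1) x, …`.
Since `τ` varies slowly, `F u - F v` agrees, up to an error `2 C δ d(u, v)`, with
`(1 - t) (f i u - f i v) + t (f j u - f j v)` for two consecutive indices `i, j` of the
subsequence.  Hence the Lipschitz constant is essentially `C`, and only a lower bound for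
such convex combinations is needed.

The lower bound, with constant `1/3 - η`, holds for generic pairs `(i, j)`
(`eventually_eventually_good`).  Otherwise, by the
ultrafilter form of Ramsey's theorem there are `t` and vectors `v 0, v 1, …` of norm at least `d`
with `‖(1 - t) v a + t v b‖ ≤ L` for all `a < b`.  Say `t ≥ 1/2`.
Let `A` be the average of many consecutive `v a`.  Averaging over the pairs `(a, a + 1)` gives
`‖A‖ ≲ L`; averaging over the pairs `(a, k)` with `k` fixed gives `‖(1 - t) A + t v k‖ ≤ L`.
Therefore `t d ≤ L + (1 - t) L`, and so `L ≳ d / 3` (`averaging_lower_bound`).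
The case `t ≤ 1/2` follows by reversing the order of the vectors.
-/

open Filter

/-! ### Convex combinations in a sequence of vectors -/

/-- If all ordered pairs of `v 0, …, v k` have a small combination with weights `s, t`, then
comparing averages over consecutive pairs and over pairs ending at `k` bounds `‖t • v k‖`. -/
lemma averaging_lower_bound {X : Type*} [NormedAddCommGroup X] [NormedSpace ℝ X]
    (v : ℕ → X) (k : ℕ) (s t L d D : ℝ) (hs : 0 ≤ s) (ht : 1 / 2 ≤ t)
    (hst : s + t = 1) (hd : ∀ i ≤ k, d ≤ ‖v i‖) (hD : ∀ i ≤ k, ‖v i‖ ≤ D) (hd0 : 0 ≤ d)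
    (hL0 : 0 ≤ L) (h : ∀ a b, a < b → b ≤ k → ‖s • v a + t • v b‖ ≤ L) :
    k * d / 3 - D ≤ k * L := by
  set S : X := ∑ a ∈ Finset.range k, v a with hS
  have h1 : ‖s • S + ((k : ℝ) * t) • v k‖ ≤ k * L := by
    have e : s • S + ((k : ℝ) * t) • v k = ∑ a ∈ Finset.range k, (s • v a + t • v k) := by
      rw [Finset.sum_add_distrib, ← Finset.smul_sum, Finset.sum_const, Finset.card_range,
        ← Nat.cast_smul_eq_nsmul ℝ, smul_smul]
    rw [e]
    refine (norm_sum_le_of_le (n := fun _ => L) _ fun a ha => ?_).trans (by simp)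
    exact h a k (Finset.mem_range.1 ha) le_rfl
  have h2 : ‖S + t • (v k - v 0)‖ ≤ k * L := by
    have e : S + t • (v k - v 0) = ∑ a ∈ Finset.range k, (s • v a + t • v (a + 1)) := by
      rw [← Finset.sum_range_sub v k, Finset.smul_sum, hS, ← Finset.sum_add_distrib]
      refine Finset.sum_congr rfl fun a _ => ?_
      have : s = 1 - t := by linarith
      subst this
      module
    rw [e]
    refine (norm_sum_le_of_le (n := fun _ => L) _ fun a ha => ?_).trans (by simp)
    exact h a (a + 1) (Nat.lt_succ_self a) (Finset.mem_range.1 ha)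
  have hD0 : 0 ≤ D := (norm_nonneg _).trans (hD 0 (Nat.zero_le k))
  have ht0 : 0 ≤ t := by linarith
  have h3 : ‖S‖ ≤ k * L + t * (2 * D) := by
    have e : S = (S + t • (v k - v 0)) - t • (v k - v 0) := by abel
    rw [e]
    refine (norm_sub_le _ _).trans (add_le_add h2 ?_)
    rw [norm_smul, Real.norm_of_nonneg ht0]
    gcongr
    refine (norm_sub_le _ _).trans ?_
    linarith [hD k le_rfl, hD 0 (Nat.zero_le k)]
  have h4 : k * t * d ≤ k * L + s * (k * L + t * (2 * D)) := by
    calc k * t * d ≤ k * t * ‖v k‖ := by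
            gcongr
            exact hd k le_rfl
      _ = ‖((k : ℝ) * t) • v k‖ := by
            rw [norm_smul, Real.norm_of_nonneg (by positivity)]
      _ = ‖(s • S + ((k : ℝ) * t) • v k) - s • S‖ := by
            congr 1
            abel
      _ ≤ k * L + s * (k * L + t * (2 * D)) := by
            refine (norm_sub_le _ _).trans (add_le_add h1 ?_)
            rw [norm_smul, Real.norm_of_nonneg hs]
            gcongr
  have hkL : 0 ≤ (k : ℝ) * L := by positivity
  have hkd : 0 ≤ (k : ℝ) * d := by positivity
  have i1 : (1 / 2) * (k * d) ≤ t * (k * d) := by gcongr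
  have i2 : s * (k * L) ≤ 1 / 2 * (k * L) := by
    gcongr
    linarith
  have i3 : s * t * D ≤ 1 / 4 * D := by
    gcongr
    nlinarith [sq_nonneg (s - t)]
  nlinarith

/-- The two-sided version of `averaging_lower_bound`: `t < 1/2` is handled by reversing the
order of `v 0, …, v k`. -/
lemma averaging_lower_bound' {X : Type*} [NormedAddCommGroup X] [NormedSpace ℝ X]
    (v : ℕ → X) (k : ℕ) (t L d D : ℝ) (ht0 : 0 ≤ t) (ht1 : t ≤ 1)
    (hd : ∀ i ≤ k, d ≤ ‖v i‖) (hD : ∀ i ≤ k, ‖v i‖ ≤ D) (hd0 : 0 ≤ d)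
    (hL0 : 0 ≤ L) (h : ∀ a b, a < b → b ≤ k → ‖(1 - t) • v a + t • v b‖ ≤ L) :
    k * d / 3 - D ≤ k * L := by
  rcases le_total (1 / 2) t with h2 | h2
  · exact averaging_lower_bound v k (1 - t) t L d D (by linarith) h2 (by ring) hd hD hd0 hL0 h
  · refine averaging_lower_bound (fun i => v (k - i)) k t (1 - t) L d D ht0 (by linarith)
      (by ring) (fun i _ => hd _ (Nat.sub_le k i)) (fun i _ => hD _ (Nat.sub_le k i)) hd0 hL0 ?_
    intro a b hab hb
    rw [add_comm]
    exact h (k - b) (k - a) (by omega) (Nat.sub_le k a)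

/-- For a bounded sequence of vectors of norm at least `d`, generic ordered pairs have all their
`(1 - t, t)` combinations of norm above any given `L < d / 3`. -/
lemma eventually_eventually_lt_norm {X : Type*} [NormedAddCommGroup X] [NormedSpace ℝ X]
    (U : Ultrafilter ℕ) (v : ℕ → X) (t L d D : ℝ) (ht0 : 0 ≤ t) (ht1 : t ≤ 1) (hd0 : 0 ≤ d)
    (hv : ∀ᶠ n in U, d ≤ ‖v n‖ ∧ ‖v n‖ ≤ D) (hL : L < d / 3) :
    ∀ᶠ i in U, ∀ᶠ j in U, L < ‖(1 - t) • v i + t • v j‖ := by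
  by_contra hcon
  rw [← Ultrafilter.eventually_not] at hcon
  have hcon' : ∀ᶠ i in U, ∀ᶠ j in U, ‖(1 - t) • v i + t • v j‖ ≤ L := by
    filter_upwards [hcon] with i hi
    rw [← Ultrafilter.eventually_not] at hi
    simpa only [not_lt] using hi
  -- an infinite set of indices all of whose ordered pairs violate the bound
  obtain ⟨φ, hφ, hφ'⟩ := exists_seq_of_forall_finset_exists
    (fun i => (d ≤ ‖v i‖ ∧ ‖v i‖ ≤ D) ∧ ∀ᶠ j in U, ‖(1 - t) • v i + t • v j‖ ≤ L)
    (fun i j => ‖(1 - t) • v i + t • v j‖ ≤ L) (by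
      intro s hs
      have : ∀ᶠ j in U, ∀ i ∈ s, ‖(1 - t) • v i + t • v j‖ ≤ L :=
        (eventually_all_finset s).2 fun i hi => (hs i hi).2
      exact ((hv.and hcon').and this).exists)
  have hL0 : 0 ≤ L := (norm_nonneg _).trans (hφ' 0 1 Nat.zero_lt_one)
  obtain ⟨k, hk⟩ := exists_nat_gt (D / (d / 3 - L))
  have hpos : 0 < d / 3 - L := by linarith
  rw [div_lt_iff₀ hpos] at hk
  have := averaging_lower_bound' (fun n => v (φ n)) k t L d D ht0 ht1
    (fun i _ => (hφ i).1.1) (fun i _ => (hφ i).1.2) hd0 hL0 (fun a b hab _ => hφ' a b hab)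
  nlinarith

/-! ### Generic pairs of embeddings of a finite set -/

/-- `f` is a bilipschitz embedding of `B` with constants `1` and `C`. -/
def BilipOn {M X : Type*} [MetricSpace M] [NormedAddCommGroup X] (C : ℝ) (B : Set M)
    (f : M → X) : Prop :=
  ∀ u ∈ B, ∀ v ∈ B, dist u v ≤ ‖f u - f v‖ ∧ ‖f u - f v‖ ≤ C * dist u v

/-- Every convex combination of `f` and `g` contracts distances on `B` by a factor
at most `c⁻¹`. -/
def GoodPair {M X : Type*} [MetricSpace M] [NormedAddCommGroup X] [NormedSpace ℝ X] (c : ℝ)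
    (B : Set M) (f g : M → X) : Prop :=
  ∀ u ∈ B, ∀ v ∈ B, ∀ t : ℝ, 0 ≤ t → t ≤ 1 →
    c * dist u v ≤ ‖(1 - t) • (f u - f v) + t • (g u - g v)‖

/-- On a finite set, generic pairs from a sequence of bilipschitz embeddings are good with
constant arbitrarily close to `1/3`. -/
lemma eventually_eventually_good {M X : Type*} [MetricSpace M] [NormedAddCommGroup X]
    [NormedSpace ℝ X] (U : Ultrafilter ℕ) (f : ℕ → M → X) (C : ℝ) (hC : 1 ≤ C) (B : Set M)
    (hB : B.Finite) (hf : ∀ᶠ n in U, BilipOn C B (f n)) (η : ℝ) (hη : 0 < η) :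
    ∀ᶠ i in U, ∀ᶠ j in U, GoodPair (1 / 3 - η) B (f i) (f j) := by
  obtain ⟨K, hK⟩ := exists_nat_gt (4 * C / η)
  rw [div_lt_iff₀ hη] at hK
  have hK0 : (0 : ℝ) < K := by
    by_contra hcon
    nlinarith
  -- the bound on the grid of parameters `m / K`; the other parameters are rounded to it below
  have key : ∀ u ∈ B, ∀ v ∈ B, ∀ m ∈ Finset.range (K + 1), ∀ᶠ i in U, ∀ᶠ j in U,
      (1 / 3 - η / 2) * dist u v ≤
        ‖(1 - (m / K : ℝ)) • (f i u - f i v) + (m / K : ℝ) • (f j u - f j v)‖ := by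
    intro u hu v hv m hm
    rcases eq_or_ne u v with rfl | huv
    · simp
    have hd : 0 < dist u v := dist_pos.2 huv
    have hm' : (m : ℝ) ≤ K := by
      exact_mod_cast Nat.lt_succ_iff.1 (Finset.mem_range.1 hm)
    have := eventually_eventually_lt_norm U (fun n => f n u - f n v) (m / K)
      ((1 / 3 - η / 2) * dist u v) (dist u v) (C * dist u v) (by positivity)
      ((div_le_one hK0).2 hm') hd.le (hf.mono fun n hn => hn u hu v hv) (by nlinarith)
    exact this.mono fun i hi => hi.mono fun j hj => hj.le
  have key2 : ∀ᶠ i in U, ∀ᶠ j in U, ∀ u ∈ B, ∀ v ∈ B, ∀ m ∈ Finset.range (K + 1),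
      (1 / 3 - η / 2) * dist u v ≤
        ‖(1 - (m / K : ℝ)) • (f i u - f i v) + (m / K : ℝ) • (f j u - f j v)‖ := by
    simp only [eventually_all_finite hB, eventually_all_finset]
    exact key
  filter_upwards [key2, hf] with i hi hfi
  filter_upwards [hi, hf] with j hj hfj
  intro u hu v hv t ht0 ht1
  set m := ⌊t * K⌋₊ with hm
  have hm1 : (m : ℝ) ≤ t * K := Nat.floor_le (by positivity)
  have hm2 : t * K < m + 1 := Nat.lt_floor_add_one _
  have hmK : m ∈ Finset.range (K + 1) := by
    rw [Finset.mem_range, Nat.lt_succ_iff]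
    have : (m : ℝ) ≤ K := by nlinarith
    exact_mod_cast this
  have h1 := hj u hu v hv m hmK
  set p := f i u - f i v with hp
  set q := f j u - f j v with hq
  have hpn : ‖p‖ ≤ C * dist u v := (hfi u hu v hv).2
  have hqn : ‖q‖ ≤ C * dist u v := (hfj u hu v hv).2
  set s : ℝ := m / K with hs
  have hts0 : 0 ≤ t - s := by
    rw [sub_nonneg, hs, div_le_iff₀ hK0]
    exact hm1
  have hts : (t - s) * K ≤ 1 := by
    rw [hs, sub_mul, div_mul_cancel₀ _ hK0.ne']
    linarith
  have e : (1 - s) • p + s • q = ((1 - t) • p + t • q) + (t - s) • (p - q) := by module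
  have h2 : ‖(t - s) • (p - q)‖ ≤ η / 2 * dist u v := by
    rw [norm_smul, Real.norm_of_nonneg hts0]
    have h3 : ‖p - q‖ ≤ 2 * C * dist u v := by
      refine (norm_sub_le _ _).trans ?_
      linarith
    have h4 : (t - s) * (2 * C) ≤ η / 2 := by
      have : (t - s) * (4 * C) ≤ (t - s) * (K * η) := by gcongr
      nlinarith
    calc (t - s) * ‖p - q‖ ≤ (t - s) * (2 * C * dist u v) := by gcongr
      _ = (t - s) * (2 * C) * dist u v := by ring
      _ ≤ η / 2 * dist u v := by gcongr
  rw [e] at h1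
  have h5 := norm_add_le ((1 - t) • p + t • q) ((t - s) • (p - q))
  linarith

/-- A diagonal choice: generic properties of elements and of pairs can be met along the
consecutive terms of one sequence, with requirements depending on the position. -/
lemma exists_chain_s15 (U : Ultrafilter ℕ) (P : ℕ → ℕ → Prop) (r : ℕ → ℕ → ℕ → Prop)
    (hP : ∀ k, ∀ᶠ i in U, P k i) (hr : ∀ k, ∀ᶠ i in U, ∀ᶠ j in U, r k i j) :
    ∃ n : ℕ → ℕ, ∀ k, P k (n k) ∧ r k (n k) (n (k + 1)) := by
  have step : ∀ k (i : {i // P k i ∧ ∀ᶠ j in U, r k i j}),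
      ∃ j : {j // P (k + 1) j ∧ ∀ᶠ l in U, r (k + 1) j l}, r k i j := by
    intro k i
    obtain ⟨j, hj, hj'⟩ := (((hP (k + 1)).and (hr (k + 1))).and i.2.2).exists
    exact ⟨⟨j, hj⟩, hj'⟩
  choose next hnext using step
  obtain ⟨i₀, hi₀⟩ := ((hP 0).and (hr 0)).exists
  let n : ∀ k, {i // P k i ∧ ∀ᶠ j in U, r k i j} := fun k => Nat.rec ⟨i₀, hi₀⟩ next k
  exact ⟨fun k => (n k).1, fun k => ⟨(n k).2.1, hnext k (n k)⟩⟩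

/-! ### Piecewise linear paths -/

/-- The piecewise linear path in `X` whose value at the integer time `j` is `g j`; only times
`τ ≥ 0` are meaningful. -/
noncomputable def polyPath {X : Type*} [NormedAddCommGroup X] [NormedSpace ℝ X] (g : ℕ → X)
    (τ : ℝ) : X :=
  g ⌊τ⌋₊ + (τ - ⌊τ⌋₊) • (g (⌊τ⌋₊ + 1) - g ⌊τ⌋₊)

/-- `polyPath g` is `K`-Lipschitz from time `τ` on, if so are the steps of `g`. -/
lemma polyPath_lipschitz {X : Type*} [NormedAddCommGroup X] [NormedSpace ℝ X] (g : ℕ → X)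
    (K τ τ' : ℝ) (h0 : 0 ≤ τ) (h : τ ≤ τ') (hg : ∀ j, ⌊τ⌋₊ ≤ j → ‖g (j + 1) - g j‖ ≤ K) :
    ‖polyPath g τ' - polyPath g τ‖ ≤ K * (τ' - τ) := by
  have hab : ⌊τ⌋₊ ≤ ⌊τ'⌋₊ := Nat.floor_mono h
  have a1 : (⌊τ⌋₊ : ℝ) ≤ τ := Nat.floor_le h0
  have a2 : τ < ⌊τ⌋₊ + 1 := Nat.lt_floor_add_one _
  have b1 : (⌊τ'⌋₊ : ℝ) ≤ τ' := Nat.floor_le (h0.trans h)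
  unfold polyPath
  generalize ⌊τ'⌋₊ = b at *
  generalize ⌊τ⌋₊ = a at *
  rcases hab.eq_or_lt with rfl | hlt
  · have e : g a + (τ' - a) • (g (a + 1) - g a) - (g a + (τ - a) • (g (a + 1) - g a))
        = (τ' - τ) • (g (a + 1) - g a) := by module
    rw [e, norm_smul, Real.norm_of_nonneg (by linarith), mul_comm]
    exact mul_le_mul_of_nonneg_right (hg a le_rfl) (by linarith)
  · have mid : ∀ m, a + 1 ≤ m → ‖g m - g (a + 1)‖ ≤ K * ((m : ℝ) - (a + 1)) := by
      intro m hm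
      induction m, hm using Nat.le_induction with
      | base => simp
      | succ m hm ih =>
        have e : g (m + 1) - g (a + 1) = (g (m + 1) - g m) + (g m - g (a + 1)) := by abel
        rw [e]
        refine (norm_add_le _ _).trans ?_
        have := hg m (by omega)
        push_cast
        linarith
    have e : g b + (τ' - b) • (g (b + 1) - g b) - (g a + (τ - a) • (g (a + 1) - g a))
        = (τ' - b) • (g (b + 1) - g b) + (g b - g (a + 1))
          + (a + 1 - τ) • (g (a + 1) - g a) := by module
    rw [e]
    refine (norm_add₃_le).trans ?_
    rw [norm_smul, norm_smul, Real.norm_of_nonneg (by linarith : 0 ≤ τ' - b),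
      Real.norm_of_nonneg (by linarith : 0 ≤ a + 1 - τ)]
    have c1 := mul_le_mul_of_nonneg_left (hg b hlt.le) (by linarith : 0 ≤ τ' - b)
    have c2 := mul_le_mul_of_nonneg_left (hg a le_rfl) (by linarith : 0 ≤ a + 1 - τ)
    have c3 := mid b hlt
    linarith

/-! ### Slow gluing -/

/-- **Corollary (finite determination of bilipschitz embeddability).**
Let `M` be a locally finite metric space and `X` an infinite-dimensional real Banach
space.  If every finite subset of `M` admits a bilipschitz embedding into `X` with
distortion at most `C`, then for every `ε > 0` the space `M` admits a bilipschitz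
embedding into `X` with distortion at most `(3+ε)·C`. -/
theorem finite_determination_bilipschitz
    (M : Type*) [MetricSpace M]
    (hM : ∀ (x : M) (r : ℝ), {y : M | dist x y ≤ r}.Finite)
    (X : Type*) [NormedAddCommGroup X] [NormedSpace ℝ X] [CompleteSpace X]
    (hX : ¬ FiniteDimensional ℝ X)
    (C : ℝ) (hC : 1 ≤ C)
    (hfin : ∀ N : Finset M, ∃ (f : N → X) (r : ℝ), 0 < r ∧ ∀ u v : N,
      r * dist (u : M) (v : M) ≤ ‖f u - f v‖ ∧
        ‖f u - f v‖ ≤ r * C * dist (u : M) (v : M))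
    (ε : ℝ) (hε : 0 < ε) :
    ∃ (F : M → X) (r : ℝ), 0 < r ∧ ∀ u v : M,
      r * dist u v ≤ ‖F u - F v‖ ∧ ‖F u - F v‖ ≤ r * ((3 + ε) * C) * dist u v := by
  rcases isEmpty_or_nonempty M with hE | ⟨⟨O⟩⟩
  · exact ⟨fun _ => 0, 1, one_pos, fun u => (hE.false u).elim⟩
  -- normalized embeddings of balls
  have hball : ∀ n : ℕ, ∃ f : M → X, f O = 0 ∧ BilipOn C {y | dist O y ≤ n} f := by
    intro n
    classical
    set N := (hM O n).toFinset with hN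
    have hmem : ∀ y, y ∈ N ↔ dist O y ≤ n := by
      intro y
      simp [hN]
    have hO : O ∈ N := (hmem O).2 (by simp)
    obtain ⟨f, r, hr, hf⟩ := hfin N
    refine ⟨fun y => if hy : y ∈ N then r⁻¹ • (f ⟨y, hy⟩ - f ⟨O, hO⟩) else 0, by simp, ?_⟩
    intro u hu v hv
    have hu' := (hmem u).2 hu
    have hv' := (hmem v).2 hv
    have e : r⁻¹ • (f ⟨u, hu'⟩ - f ⟨O, hO⟩) - r⁻¹ • (f ⟨v, hv'⟩ - f ⟨O, hO⟩)
        = r⁻¹ • (f ⟨u, hu'⟩ - f ⟨v, hv'⟩) := by module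
    simp only [hu', hv', dite_true]
    rw [e, norm_smul, Real.norm_of_nonneg (inv_nonneg.2 hr.le), inv_mul_eq_div,
      le_div_iff₀ hr, div_le_iff₀ hr]
    obtain ⟨h1, h2⟩ := hf ⟨u, hu'⟩ ⟨v, hv'⟩
    simp only at h1 h2
    constructor <;> linarith
  choose f hfO hf using hball
  have hC0 : 0 < C := by linarith
  set e := min ε 1 with he
  have he0 : 0 < e := lt_min hε one_pos
  have he1 : e ≤ 1 := min_le_right _ _
  have heε : e ≤ ε := min_le_left _ _
  set δ := e / (100 * C) with hδ
  have hδ0 : 0 < δ := by positivity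
  have hδC : C * δ = e / 100 := by
    rw [hδ]
    field_simp
  set η := e / 100 with hη
  have hη0 : 0 < η := by positivity
  set τ : M → ℝ := fun x => δ * Real.log (1 + dist O x) with hτ
  have hτ0 : ∀ x, 0 ≤ τ x := fun x =>
    mul_nonneg hδ0.le (Real.log_nonneg (by linarith [dist_nonneg (x := O) (y := x)]))
  set S : ℕ → Set M := fun j => {x | τ x ≤ j + 1} with hS
  have hSb : ∀ j x, x ∈ S j → dist O x ≤ Real.exp ((j + 1) / δ) := by
    intro j x hx
    have hx' : δ * Real.log (1 + dist O x) ≤ j + 1 := hx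
    have hp : 0 < 1 + dist O x := by positivity
    have : Real.log (1 + dist O x) ≤ (j + 1) / δ := by
      rw [le_div_iff₀ hδ0]
      linarith
    rw [Real.log_le_iff_le_exp hp] at this
    linarith
  have hSfin : ∀ j, (S j).Finite := fun j => (hM O _).subset fun x hx => hSb j x hx
  let U : Ultrafilter ℕ := hyperfilter ℕ
  have hU : (U : Filter ℕ) ≤ atTop := Nat.hyperfilter_le_atTop
  have hP : ∀ k, ∀ᶠ i in U, BilipOn C (S k) (f i) := by
    intro k
    obtain ⟨N, hN⟩ := exists_nat_ge (Real.exp ((k + 1) / δ))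
    filter_upwards [hU (eventually_ge_atTop N)] with i hi u hu v hv
    have hi' : (N : ℝ) ≤ i := by exact_mod_cast hi
    exact hf i u ((hSb k u hu).trans (hN.trans hi')) v ((hSb k v hv).trans (hN.trans hi'))
  obtain ⟨n, hn⟩ := exists_chain_s15 U (fun k i => BilipOn C (S k) (f i))
    (fun k i j => GoodPair (1 / 3 - η) (S k) (f i) (f j)) hP
    (fun k => eventually_eventually_good U f C hC (S k) (hSfin k) (hP k) η hη0)
  have hmono : ∀ {j k : ℕ}, j ≤ k → S j ⊆ S k := by
    intro j k hjk x hx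
    have hx' : τ x ≤ j + 1 := hx
    have : (j : ℝ) ≤ k := by exact_mod_cast hjk
    exact hx'.trans (by linarith)
  have hOS : ∀ j, O ∈ S j := by
    intro j
    change δ * Real.log (1 + dist O O) ≤ j + 1
    simp only [dist_self, add_zero, Real.log_one, mul_zero]
    positivity
  have hfl : ∀ x, x ∈ S ⌊τ x⌋₊ := fun x => (Nat.lt_floor_add_one (τ x)).le
  have hτmono : ∀ u v, dist O u ≤ dist O v → τ u ≤ τ v := by
    intro u v huv
    have : 0 < 1 + dist O u := by positivity
    change δ * Real.log _ ≤ δ * Real.log _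
    gcongr
  have hτlip : ∀ u v, dist O u ≤ dist O v → dist O u * (τ v - τ u) ≤ δ * dist u v := by
    intro u v huv
    have hu : 0 ≤ dist O u := dist_nonneg
    have hp : 0 < 1 + dist O u := by positivity
    have hq : 0 < 1 + dist O v := by positivity
    have h1 : Real.log (1 + dist O v) - Real.log (1 + dist O u)
        ≤ (dist O v - dist O u) / (1 + dist O u) := by
      rw [← Real.log_div hq.ne' hp.ne']
      refine (Real.log_le_sub_one_of_pos (by positivity)).trans (le_of_eq ?_)
      field_simp
      ring
    rw [le_div_iff₀ hp] at h1
    have h2 : dist O v ≤ dist O u + dist u v := dist_triangle _ _ _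
    have h3 : 0 ≤ Real.log (1 + dist O v) - Real.log (1 + dist O u) :=
      sub_nonneg.2 (Real.log_le_log hp (by linarith))
    have h4 : dist O u * (Real.log (1 + dist O v) - Real.log (1 + dist O u)) ≤ dist u v := by
      linarith
    calc dist O u * (τ v - τ u)
        = δ * (dist O u * (Real.log (1 + dist O v) - Real.log (1 + dist O u))) := by
          simp only [hτ]
          ring
      _ ≤ δ * dist u v := by gcongr
  set F : M → X := fun x => polyPath (fun j => f (n j) x) (τ x) with hF
  have main : ∀ u v, dist O u ≤ dist O v →
      (1 / 3 - η - 2 * (C * δ)) * dist u v ≤ ‖F u - F v‖ ∧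
      ‖F u - F v‖ ≤ (C + 2 * (C * δ)) * dist u v := by
    intro u v huv
    -- moving the time at the point nearer to `O` costs only `2 C δ d(u, v)`
    have hmove : ‖polyPath (fun j => f (n j) u) (τ v) - F u‖ ≤ 2 * (C * δ) * dist u v := by
      refine (polyPath_lipschitz (fun j => f (n j) u) (2 * C * dist O u) (τ u) (τ v) (hτ0 u)
        (hτmono u v huv) ?_).trans ?_
      · intro j hj
        have hb : ∀ k, ⌊τ u⌋₊ ≤ k → ‖f (n k) u‖ ≤ C * dist O u := by
          intro k hk
          have := ((hn k).1 u (hmono hk (hfl u)) O (hOS k)).2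
          rwa [hfO, sub_zero, dist_comm] at this
        refine (norm_sub_le _ _).trans ?_
        linarith [hb j hj, hb (j + 1) (by omega)]
      · have := hτlip u v huv
        calc 2 * C * dist O u * (τ v - τ u) = 2 * C * (dist O u * (τ v - τ u)) := by ring
          _ ≤ 2 * C * (δ * dist u v) := by gcongr
          _ = 2 * (C * δ) * dist u v := by ring
    set k := ⌊τ v⌋₊ with hk
    set t : ℝ := τ v - k with ht
    have ht0 : 0 ≤ t := sub_nonneg.2 (Nat.floor_le (hτ0 v))
    have ht1 : t ≤ 1 := by
      have := Nat.lt_floor_add_one (τ v)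
      rw [← hk] at this
      linarith
    have hvS : v ∈ S k := hfl v
    have huS : u ∈ S k := (hτmono u v huv).trans hvS
    have hdiff : polyPath (fun j => f (n j) u) (τ v) - F v
        = (1 - t) • (f (n k) u - f (n k) v)
          + t • (f (n (k + 1)) u - f (n (k + 1)) v) := by
      simp only [hF, polyPath, ← hk, ← ht]
      module
    set w := polyPath (fun j => f (n j) u) (τ v) with hw
    have hlow : (1 / 3 - η) * dist u v ≤ ‖w - F v‖ := by
      rw [hdiff]
      exact (hn k).2 u huS v hvS t ht0 ht1
    have hup : ‖w - F v‖ ≤ C * dist u v := by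
      rw [hdiff]
      refine (norm_add_le _ _).trans ?_
      rw [norm_smul, norm_smul, Real.norm_of_nonneg ht0, Real.norm_of_nonneg (sub_nonneg.2 ht1)]
      have h1 := mul_le_mul_of_nonneg_left ((hn k).1 u huS v hvS).2 (sub_nonneg.2 ht1)
      have h2 := mul_le_mul_of_nonneg_left
        ((hn (k + 1)).1 u (hmono k.le_succ huS) v (hmono k.le_succ hvS)).2 ht0
      linarith
    have e1 : w - F v = (w - F u) + (F u - F v) := by abel
    have e2 : F u - F v = (w - F v) - (w - F u) := by abel
    constructor
    · have := norm_add_le (w - F u) (F u - F v)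
      rw [← e1] at this
      linarith
    · have := norm_sub_le (w - F v) (w - F u)
      rw [← e2] at this
      linarith
  have hall : ∀ u v, (1 / 3 - η - 2 * (C * δ)) * dist u v ≤ ‖F u - F v‖ ∧
      ‖F u - F v‖ ≤ (C + 2 * (C * δ)) * dist u v := by
    intro u v
    rcases le_total (dist O u) (dist O v) with h | h
    · exact main u v h
    · have := main v u h
      rwa [dist_comm, norm_sub_rev] at this
  refine ⟨F, 1 / 3 - η - 2 * (C * δ), ?_, fun u v => ⟨(hall u v).1, (hall u v).2.trans ?_⟩⟩
  · rw [hδC, hη]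
    linarith
  · gcongr
    rw [hδC, hη]
    have h1 : (1 : ℝ) + e / 50 ≤ (1 / 3 - e / 100 - 2 * (e / 100)) * (3 + ε) := by
      have : (1 / 3 - e / 100 - 2 * (e / 100)) * (3 + e)
          ≤ (1 / 3 - e / 100 - 2 * (e / 100)) * (3 + ε) := by
        gcongr
        linarith
      nlinarith
    calc C + 2 * (e / 100) ≤ (1 + e / 50) * C := by nlinarith
      _ ≤ (1 / 3 - e / 100 - 2 * (e / 100)) * (3 + ε) * C := by gcongr
      _ = (1 / 3 - e / 100 - 2 * (e / 100)) * ((3 + ε) * C) := by ring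
end
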